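/- The second moment of the permanent of the random symmetric Rademacher matrix satisfies E[(per M_n)^2] ≤ n^{n+o(n)}; precisely, for every ε > 0 and all n sufficiently large with respect to ε, E[(per M_n)^2] ≤ n^{(1+ε)n}. -/

import Mathlib

/-!
Expand `(per M)²` as a sum over pairs `(σ, τ)` of permutations. Negating the entry of `M` at an
unordered pair `{a, b}` preserves the distribution of `M`, so the term of `(σ, τ)` has mean zero
unless `σ` and `τ` use every unordered pair with the same parity, where `σ` uses the pairs
`{i, σ i}`.

If the parities agree, then `σ` and `τ` have the same set `S` of points lying on 2-cycles, and
`τ i` is `σ i` or `σ⁻¹ i` for `i ∉ S`. A 2-cycle is known once the image of its larger point, or of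
its smaller point, is known. So apart from three subsets of `Fin n` (the larger points on the
2-cycles of `σ`, those on the 2-cycles of `τ`, and the set where `σ = τ`), the pair is determined by
`n - |S| / 2` values of `σ` and `|S| / 2` values of `τ`. Hence at most `8 ^ n * n ^ n` pairs
contribute, each of them at most `1`, and `8 ^ n ≤ n ^ (ε * n)` for large `n`.
-/

open Finset

/-- The real number (`1` or `-1`) associated to a Boolean: a Rademacher value. -/
noncomputable def rad (b : Bool) : ℝ := if b then 1 else -1

/-- The permanent of a square real matrix. -/
noncomputable def perm {n : ℕ} (M : Matrix (Fin n) (Fin n) ℝ) : ℝ :=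
  ∑ σ : Equiv.Perm (Fin n), ∏ i, M i (σ i)

/-- The symmetric `n × n` sign matrix determined by Boolean data `ω` (the entries on and
above the diagonal are `rad (ω i j)` for `i ≤ j`; below-diagonal entries are given by
symmetry). As `ω` ranges uniformly over all Boolean data, this is exactly the random
symmetric matrix `M_n` with i.i.d. Rademacher entries on and above the diagonal. -/
noncomputable def symMat (n : ℕ) (ω : Fin n → Fin n → Bool) : Matrix (Fin n) (Fin n) ℝ :=
  fun i j => if i ≤ j then rad (ω i j) else rad (ω j i)

open Classical in
/-- The probability of the event `P` for the random symmetric Rademacher matrix `M_n`. -/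
noncomputable def prob (n : ℕ) (P : Matrix (Fin n) (Fin n) ℝ → Prop) : ℝ :=
  ((univ.filter fun ω : Fin n → Fin n → Bool => P (symMat n ω)).card : ℝ) / 2 ^ (n * n)

section EdgeParity

variable {α : Type*} [Fintype α] [DecidableEq α] {f g : α → α}

/-- The number of times the function `f` uses the unordered pair `e`, that is, the multiplicity of
`e` among the pairs `{i, f i}`; loops `{i, i}` are allowed. -/
def edgeCount (f : α → α) (e : Sym2 α) : ℕ := #{i | s(i, f i) = e}

theorem even_edgeCount_diag {a : α} : Even (edgeCount f s(a, a)) ↔ f a ≠ a := by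
  have hcount : edgeCount f s(a, a) = if f a = a then 1 else 0 := by
    rw [edgeCount, card_filter, Fintype.sum_eq_single a fun i hi => by simp [hi]]
    simp
  split_ifs at hcount with h <;> simp [hcount, h]

theorem even_edgeCount_of_ne {a b : α} (hab : a ≠ b) :
    Even (edgeCount f s(a, b)) ↔ (f a = b ↔ f b = a) := by
  have hcount : edgeCount f s(a, b) =
      (if f a = b then 1 else 0) + if f b = a then 1 else 0 := by
    rw [edgeCount, card_filter, Fintype.sum_eq_add a b hab fun i hi => by simp [hi.1, hi.2]]
    simp [hab, hab.symm]
  split_ifs at hcount with h₁ h₂ h₂ <;> simp [hcount, h₁, h₂]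

/-- The functions `f` and `g` use every unordered pair with the same parity. This is the condition
under which the product of the monomials of `f` and `g` in the entries of a symmetric sign matrix
can have nonzero mean. -/
def SameEdgeParity (f g : α → α) : Prop :=
  ∀ e, Even (edgeCount f e) ↔ Even (edgeCount g e)

instance : DecidableRel (SameEdgeParity (α := α)) :=
  fun f g => inferInstanceAs (Decidable (∀ e, Even (edgeCount f e) ↔ Even (edgeCount g e)))

namespace SameEdgeParity

theorem symm (h : SameEdgeParity f g) : SameEdgeParity g f := fun e => (h e).symm

theorem apply_eq_self_iff (h : SameEdgeParity f g) {a : α} : f a = a ↔ g a = a := by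
  simpa only [even_edgeCount_diag, not_iff_not] using h s(a, a)

theorem swap_iff (h : SameEdgeParity f g) {a b : α} (hab : a ≠ b) :
    (f a = b ↔ f b = a) ↔ (g a = b ↔ g b = a) := by
  simpa only [even_edgeCount_of_ne hab] using h s(a, b)

end SameEdgeParity

/-- The points lying on 2-cycles of `f`. -/
def twoCyclePoints (f : α → α) : Finset α := {i | f (f i) = i ∧ f i ≠ i}

theorem mem_twoCyclePoints {i : α} : i ∈ twoCyclePoints f ↔ f (f i) = i ∧ f i ≠ i := by
  simp [twoCyclePoints]

namespace SameEdgeParity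

theorem apply_eq_or_apply_apply_eq (h : SameEdgeParity f g) {i : α} (hi : i ∉ twoCyclePoints g) :
    g i = f i ∨ f (g i) = i := by
  by_cases hfix : g i = i
  · exact .inl (hfix.trans (h.apply_eq_self_iff.2 hfix).symm)
  · have hback : g (g i) ≠ i := fun hback => hi (mem_twoCyclePoints.2 ⟨hback, hfix⟩)
    have hodd : ¬(f i = g i ↔ f (g i) = i) := by simp [h.swap_iff (Ne.symm hfix), hback]
    tauto

theorem twoCyclePoints_subset (h : SameEdgeParity f g) (hg : g.Injective) :
    twoCyclePoints g ⊆ twoCyclePoints f := by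
  intro i hi
  by_contra hfi
  obtain ⟨hback, hne⟩ := mem_twoCyclePoints.1 hi
  have hfg : f i = g i := (h.symm.apply_eq_or_apply_apply_eq hfi).elim id
    fun hgf => hg (hgf.trans hback.symm)
  have hswap : f i = g i ↔ f (g i) = i := (h.swap_iff hne.symm).2 (by simp [hback])
  exact hfi (mem_twoCyclePoints.2 ⟨hfg ▸ hswap.1 hfg, hfg ▸ hne⟩)

theorem twoCyclePoints_eq (h : SameEdgeParity f g) (hf : f.Injective) (hg : g.Injective) :
    twoCyclePoints f = twoCyclePoints g :=
  (h.symm.twoCyclePoints_subset hf).antisymm (h.twoCyclePoints_subset hg)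

end SameEdgeParity

end EdgeParity

section Counting

variable {α : Type*} [Fintype α] [LinearOrder α]

/-- The points that are the larger of the two points of a 2-cycle of `f`. -/
def twoCycleMaxima (f : α → α) : Finset α := {i ∈ twoCyclePoints f | f i < i}

theorem mem_twoCycleMaxima {f : α → α} {i : α} :
    i ∈ twoCycleMaxima f ↔ f (f i) = i ∧ f i < i := by
  simp only [twoCycleMaxima, mem_filter, mem_twoCyclePoints, and_assoc, and_congr_right_iff,
    and_iff_right_iff_imp]
  exact fun _ => ne_of_lt

theorem two_mul_card_twoCycleMaxima (f : α → α) :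
    2 * #(twoCycleMaxima f) = #(twoCyclePoints f) := by
  have hminima : #(twoCycleMaxima f) = #{i ∈ twoCyclePoints f | ¬f i < i} := by
    refine card_nbij' f f ?_ ?_ ?_ ?_ <;> intro i hi <;>
      simp only [twoCycleMaxima, coe_filter, Set.mem_ofPred_eq, mem_twoCyclePoints] at hi ⊢ <;>
      grind
  rw [two_mul]
  nth_rw 2 [hminima]
  exact card_filter_add_card_filter_not _

theorem SameEdgeParity.card_twoCycleMaxima_eq {f g : α → α} (h : SameEdgeParity f g)
    (hf : f.Injective) (hg : g.Injective) : #(twoCycleMaxima f) = #(twoCycleMaxima g) := by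
  have hpoints := congrArg card (h.twoCyclePoints_eq hf hg)
  rw [← two_mul_card_twoCycleMaxima, ← two_mul_card_twoCycleMaxima] at hpoints
  exact Nat.eq_of_mul_eq_mul_left two_pos hpoints

theorem apply_notMem_twoCycleMaxima {f : α → α} {i : α} (hi : i ∈ twoCycleMaxima f) :
    f i ∉ twoCycleMaxima f := by
  rw [mem_twoCycleMaxima] at hi ⊢
  rw [hi.1]
  exact fun h => h.2.not_gt hi.2

theorem apply_mem_twoCycleMaxima {f : α → α} {i : α} (hi : i ∈ twoCyclePoints f)
    (hmax : i ∉ twoCycleMaxima f) : f i ∈ twoCycleMaxima f := by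
  rw [mem_twoCyclePoints] at hi
  rw [mem_twoCycleMaxima] at hmax ⊢
  rw [hi.1]
  exact ⟨rfl, hi.2.lt_or_gt.resolve_left fun hlt => hmax ⟨hi.1, hlt⟩⟩

theorem eq_of_eqOn_compl_twoCycleMaxima {f g : α → α} (hg : g.Injective)
    (hmax : twoCycleMaxima f = twoCycleMaxima g)
    (heq : ∀ i ∉ twoCycleMaxima f, f i = g i) : f = g := by
  ext i
  by_cases hi : i ∈ twoCycleMaxima f
  · refine hg ?_
    calc g (f i) = f (f i) := (heq _ (apply_notMem_twoCycleMaxima hi)).symm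
      _ = i := (mem_twoCycleMaxima.1 hi).1
      _ = g (g i) := (mem_twoCycleMaxima.1 (hmax ▸ hi)).1.symm
  · exact heq i hi

theorem eqOn_twoCyclePoints {f g : α → α} (hmax : twoCycleMaxima f = twoCycleMaxima g)
    (heq : ∀ i ∈ twoCycleMaxima f, f i = g i) : ∀ i ∈ twoCyclePoints f, f i = g i := by
  intro i hi
  by_cases hi' : i ∈ twoCycleMaxima f
  · exact heq i hi'
  · have hfi := apply_mem_twoCycleMaxima hi hi'
    have hgfi : g (f i) = i := (heq _ hfi).symm.trans (mem_twoCyclePoints.1 hi).1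
    calc f i = g (g (f i)) := (mem_twoCycleMaxima.1 (hmax ▸ hfi)).1.symm
      _ = g i := by rw [hgfi]

theorem SameEdgeParity.eq_of_eqOn_twoCycleMaxima {f g g' : α → α} (h : SameEdgeParity f g)
    (h' : SameEdgeParity f g') (hf : f.Injective) (hg : g.Injective) (hg' : g'.Injective)
    (hmax : twoCycleMaxima g = twoCycleMaxima g') (hagree : ∀ i, g i = f i ↔ g' i = f i)
    (heq : ∀ i ∈ twoCycleMaxima g, g i = g' i) : g = g' := by
  ext i
  by_cases hi : i ∈ twoCyclePoints g
  · exact eqOn_twoCyclePoints hmax heq i hi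
  have hi' : i ∉ twoCyclePoints g' := by
    rwa [← h'.twoCyclePoints_eq hf hg', h.twoCyclePoints_eq hf hg]
  by_cases hgf : g i = f i
  · exact hgf.trans ((hagree i).1 hgf).symm
  · have hback : f (g i) = i := (h.apply_eq_or_apply_apply_eq hi).resolve_left hgf
    have hback' : f (g' i) = i :=
      (h'.apply_eq_or_apply_apply_eq hi').resolve_left (mt (hagree i).2 hgf)
    exact hf (hback.trans hback'.symm)

/-- The three subsets of `α` recorded about a pair of permutations in order to count the pairs with
the same edge parities. -/
def pairCode (p : Equiv.Perm α × Equiv.Perm α) : Finset α × Finset α × Finset α :=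
  (twoCycleMaxima p.1, twoCycleMaxima p.2, ({i | p.2 i = p.1 i} : Finset α))

theorem SameEdgeParity.pair_ext {p q : Equiv.Perm α × Equiv.Perm α}
    (hp : SameEdgeParity p.1 p.2) (hq : SameEdgeParity q.1 q.2) (hcode : pairCode p = pairCode q)
    (h₁ : ∀ i ∉ twoCycleMaxima p.1, p.1 i = q.1 i)
    (h₂ : ∀ i ∈ twoCycleMaxima p.2, p.2 i = q.2 i) : p = q := by
  obtain ⟨σ, τ⟩ := p
  obtain ⟨σ', τ'⟩ := q
  simp only [pairCode, Prod.mk.injEq] at hcode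
  obtain ⟨hmax₁, hmax₂, hagree⟩ := hcode
  obtain rfl : σ = σ' :=
    DFunLike.coe_injective (eq_of_eqOn_compl_twoCycleMaxima σ'.injective hmax₁ h₁)
  have hτ : τ = τ' := DFunLike.coe_injective <|
    hp.eq_of_eqOn_twoCycleMaxima hq σ.injective τ.injective τ'.injective hmax₂
      (fun i => by simpa using Finset.ext_iff.1 hagree i) h₂
  rw [hτ]

theorem card_sameEdgeParity_pairCode_eq_le {q : Equiv.Perm α × Equiv.Perm α}
    (hq : SameEdgeParity q.1 q.2) :
    #{p : Equiv.Perm α × Equiv.Perm α | SameEdgeParity p.1 p.2 ∧ pairCode p = pairCode q} ≤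
      Fintype.card α ^ Fintype.card α := by
  set A := twoCycleMaxima q.1
  set B := twoCycleMaxima q.2
  have hcard : Fintype.card (((Aᶜ : Finset α) → α) × (B → α)) =
      Fintype.card α ^ Fintype.card α := by
    have hAB : #A = #B := hq.card_twoCycleMaxima_eq q.1.injective q.2.injective
    rw [Fintype.card_prod, Fintype.card_fun, Fintype.card_fun, ← pow_add, Fintype.card_coe,
      Fintype.card_coe, ← hAB, card_compl_add_card]
  rw [← hcard, ← card_univ]
  refine card_le_card_of_injOn (fun p => (Aᶜ.restrict p.1, B.restrict p.2))
    (fun _ _ => mem_coe.2 (mem_univ _)) fun p hp p' hp' hpp' => ?_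
  obtain ⟨hparity, hcode⟩ := (mem_filter.1 (mem_coe.1 hp)).2
  obtain ⟨hparity', hcode'⟩ := (mem_filter.1 (mem_coe.1 hp')).2
  obtain ⟨hA, hB, -⟩ : twoCycleMaxima p.1 = A ∧ twoCycleMaxima p.2 = B ∧ _ := by
    simpa only [pairCode, Prod.mk.injEq] using hcode
  obtain ⟨hvalues₁, hvalues₂⟩ := Prod.mk.inj hpp'
  exact hparity.pair_ext hparity' (hcode.trans hcode'.symm)
    (fun i hi => congrFun hvalues₁ ⟨i, mem_compl.2 (hA ▸ hi)⟩)
    (fun i hi => congrFun hvalues₂ ⟨i, hB ▸ hi⟩)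

variable (α) in
theorem card_sameEdgeParity_le :
    #{p : Equiv.Perm α × Equiv.Perm α | SameEdgeParity p.1 p.2} ≤
      8 ^ Fintype.card α * Fintype.card α ^ Fintype.card α := by
  have hcodes : Fintype.card (Finset α × Finset α × Finset α) = 8 ^ Fintype.card α := by
    simp only [Fintype.card_prod, Fintype.card_finset, ← mul_pow]
    norm_num
  rw [← hcodes, mul_comm, ← card_univ]
  refine (card_le_mul_card_image (f := pairCode) _ _ fun c hc => ?_).trans
    (Nat.mul_le_mul_left _ (card_le_univ _))
  obtain ⟨q, hq, rfl⟩ := mem_image.1 hc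
  rw [filter_filter]
  exact card_sameEdgeParity_pairCode_eq_le (mem_filter.1 hq).2

end Counting

section SignMatrix

variable {n : ℕ}

theorem rad_not (b : Bool) : rad (!b) = -rad b := by
  cases b <;> simp [rad]

theorem abs_rad (b : Bool) : |rad b| = 1 := by
  cases b <;> simp [rad]

theorem abs_symMat (ω : Fin n → Fin n → Bool) (i j : Fin n) : |symMat n ω i j| = 1 := by
  unfold symMat
  split_ifs <;> exact abs_rad _

/-- Negate the Booleans at both positions `(a, b)` and `(b, a)` of the unordered pair
`e = {a, b}`; only one of them is seen by `symMat`. -/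
def flipEdge {α : Type*} [DecidableEq α] (e : Sym2 α) (ω : α → α → Bool) : α → α → Bool :=
  fun i j => if s(i, j) = e then !ω i j else ω i j

theorem flipEdge_involutive {α : Type*} [DecidableEq α] (e : Sym2 α) :
    Function.Involutive (flipEdge e) := by
  intro ω
  ext i j
  by_cases h : s(i, j) = e <;> simp [flipEdge, h]

theorem symMat_flipEdge (e : Sym2 (Fin n)) (ω : Fin n → Fin n → Bool) (i j : Fin n) :
    symMat n (flipEdge e ω) i j = (if s(i, j) = e then -1 else 1) * symMat n ω i j := by
  by_cases h : s(i, j) = e <;> by_cases hij : i ≤ j <;>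
    simp [symMat, flipEdge, Sym2.eq_swap (a := j), h, hij, rad_not]

theorem prod_symMat_flipEdge (e : Sym2 (Fin n)) (ω : Fin n → Fin n → Bool) (f : Fin n → Fin n) :
    ∏ i, symMat n (flipEdge e ω) i (f i) = (-1) ^ edgeCount f e * ∏ i, symMat n ω i (f i) := by
  simp only [symMat_flipEdge, prod_mul_distrib, prod_ite, prod_const, one_pow, mul_one, edgeCount]

theorem sum_prod_symMat_mul_prod_symMat_eq_zero {f g : Fin n → Fin n} (h : ¬SameEdgeParity f g) :
    ∑ ω, (∏ i, symMat n ω i (f i)) * ∏ i, symMat n ω i (g i) = 0 := by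
  obtain ⟨e, he⟩ := not_forall.1 h
  have hodd : (-1 : ℝ) ^ edgeCount f e * (-1) ^ edgeCount g e = -1 := by
    rw [← pow_add, Odd.neg_one_pow (Nat.not_even_iff_odd.1 (mt Nat.even_add.1 he))]
  set F : (Fin n → Fin n → Bool) → ℝ :=
    fun ω => (∏ i, symMat n ω i (f i)) * ∏ i, symMat n ω i (g i)
  have hflip (ω) : F (flipEdge e ω) = -F ω := by
    simp only [F, prod_symMat_flipEdge]
    rw [mul_mul_mul_comm, hodd, neg_one_mul]
  refine self_eq_neg.1 ?_
  calc ∑ ω, F ω = ∑ ω, F (flipEdge e ω) := (Equiv.sum_comp (flipEdge_involutive e).toPerm F).symm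
    _ = -∑ ω, F ω := by simp only [hflip, sum_neg_distrib]

theorem sum_prod_symMat_mul_prod_symMat_le (f g : Fin n → Fin n) :
    ∑ ω, (∏ i, symMat n ω i (f i)) * ∏ i, symMat n ω i (g i) ≤ 2 ^ (n * n) := by
  calc ∑ ω, (∏ i, symMat n ω i (f i)) * ∏ i, symMat n ω i (g i)
      ≤ ∑ _ω : Fin n → Fin n → Bool, (1 : ℝ) := sum_le_sum fun ω _ =>
        (le_abs_self _).trans_eq (by simp [abs_mul, abs_prod, abs_symMat])
    _ = 2 ^ (n * n) := by simp [pow_mul]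

theorem perm_sq (M : Matrix (Fin n) (Fin n) ℝ) :
    perm M ^ 2 = ∑ p : Equiv.Perm (Fin n) × Equiv.Perm (Fin n),
      (∏ i, M i (p.1 i)) * ∏ i, M i (p.2 i) := by
  rw [sq, perm, sum_mul_sum, Fintype.sum_prod_type]

theorem secondMoment_perm_symMat_le (n : ℕ) :
    (∑ ω : Fin n → Fin n → Bool, perm (symMat n ω) ^ 2) / 2 ^ (n * n) ≤ 8 ^ n * (n : ℝ) ^ n := by
  set pairs : Finset (Equiv.Perm (Fin n) × Equiv.Perm (Fin n)) := {p | SameEdgeParity p.1 p.2}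
  have hpairs : (#pairs : ℝ) ≤ 8 ^ n * (n : ℝ) ^ n := by
    have := card_sameEdgeParity_le (Fin n)
    rw [Fintype.card_fin] at this
    exact_mod_cast this
  rw [div_le_iff₀ (by positivity)]
  calc ∑ ω, perm (symMat n ω) ^ 2
      = ∑ p : Equiv.Perm (Fin n) × Equiv.Perm (Fin n),
          ∑ ω, (∏ i, symMat n ω i (p.1 i)) * ∏ i, symMat n ω i (p.2 i) := by
        simp only [perm_sq]
        exact sum_comm
    _ = ∑ p ∈ pairs, ∑ ω, (∏ i, symMat n ω i (p.1 i)) * ∏ i, symMat n ω i (p.2 i) :=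
        (sum_filter_of_ne fun _ _ => not_imp_comm.1 sum_prod_symMat_mul_prod_symMat_eq_zero).symm
    _ ≤ #pairs • (2 : ℝ) ^ (n * n) :=
        sum_le_card_nsmul _ _ _ fun _ _ => sum_prod_symMat_mul_prod_symMat_le _ _
    _ ≤ 8 ^ n * (n : ℝ) ^ n * 2 ^ (n * n) := by
        rw [nsmul_eq_mul]
        gcongr

end SignMatrix

theorem eventually_pow_mul_pow_le_rpow {c ε : ℝ} (hc : 0 ≤ c) (hε : 0 < ε) :
    ∀ᶠ n : ℕ in Filter.atTop, c ^ n * (n : ℝ) ^ n ≤ (n : ℝ) ^ ((1 + ε) * (n : ℝ)) := by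
  have hlarge : ∀ᶠ n : ℕ in Filter.atTop, c ≤ (n : ℝ) ^ ε :=
    ((tendsto_rpow_atTop hε).comp tendsto_natCast_atTop_atTop).eventually_ge_atTop c
  filter_upwards [hlarge, Filter.eventually_gt_atTop 0] with n hcn hn
  calc c ^ n * (n : ℝ) ^ n ≤ ((n : ℝ) ^ ε) ^ n * (n : ℝ) ^ n := by gcongr
    _ = ((n : ℝ) ^ (1 + ε)) ^ n := by
        rw [← mul_pow, Real.rpow_add (by exact_mod_cast hn), Real.rpow_one, mul_comm]
    _ = (n : ℝ) ^ ((1 + ε) * (n : ℝ)) := by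
        rw [Real.rpow_mul n.cast_nonneg, Real.rpow_natCast]

/-- The second moment of the permanent of the random symmetric Rademacher matrix satisfies
`E[(per M_n)^2] ≤ n^((1+ε)n)` for every `ε > 0` and all sufficiently large `n`. Here the
expectation is written as the average over all Boolean data `ω`. -/
theorem per_second_moment (ε : ℝ) (hε : 0 < ε) :
    ∃ n₀ : ℕ, ∀ n : ℕ, n₀ ≤ n →
      (∑ ω : Fin n → Fin n → Bool, perm (symMat n ω) ^ 2) / 2 ^ (n * n) ≤
        (n : ℝ) ^ ((1 + ε) * (n : ℝ)) := by
  obtain ⟨n₀, hn₀⟩ := Filter.eventually_atTop.1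
    (eventually_pow_mul_pow_le_rpow (c := 8) (by norm_num) hε)
  exact ⟨n₀, fun n hn => (secondMoment_perm_symMat_le n).trans (hn₀ n hn)⟩
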